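/- Let λ1 ≥ λ2 ≥ λ3 ≥ λ4 ≥ 0 with λ1 + λ2 + λ3 + λ4 = 1, and suppose 2λ2 + λ3 − λ1 < 0, 2λ3 + λ4 − λ2 ≥ 0, λ3 > 2λ4, and λ2 > (3/2)λ3 (spectral region C). Then there exists no non-entangling (NE) map Λ satisfying Λ(ρ_λ) = σ_λ, where ρ_λ = λ1 Φ1 + λ2 |01⟩⟨01| + λ3 Φ2 + λ4 |10⟩⟨10| and σ_λ = λ1 Φ1 + λ2 Φ2 + λ3 Φ3 + λ4 Φ4. -/

import Mathlib

open Matrix Kronecker Polynomial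
open scoped ComplexOrder

noncomputable section

/-- Index set for two qubits: ℂ²⊗ℂ² ≅ ℂ⁴ with basis |00⟩,|01⟩,|10⟩,|11⟩. -/
abbrev Q2 : Type := Fin 2 × Fin 2
abbrev Mat2 : Type := Matrix (Fin 2) (Fin 2) ℂ
abbrev Mat4 : Type := Matrix Q2 Q2 ℂ
abbrev Vec4 : Type := Q2 → ℂ

/-- Computational basis vector |ij⟩. -/
def ket (i j : Fin 2) : Vec4 := fun p => if p = (i, j) then 1 else 0

/-- The rank-one matrix |ψ⟩⟨φ|. -/
def ketBra (ψ φ : Vec4) : Mat4 := fun p q => ψ p * star (φ q)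

/-- The four Bell vectors |Φ1⟩,…,|Φ4⟩. -/
def bell : Fin 4 → Vec4 :=
  ![(Real.sqrt 2 : ℂ)⁻¹ • (ket 0 0 + ket 1 1),
    (Real.sqrt 2 : ℂ)⁻¹ • (ket 0 0 - ket 1 1),
    (Real.sqrt 2 : ℂ)⁻¹ • (ket 1 0 + ket 0 1),
    (Real.sqrt 2 : ℂ)⁻¹ • (ket 1 0 - ket 0 1)]

/-- Bell projectors Φ_i = |Φ_i⟩⟨Φ_i|. -/
def bellProj (i : Fin 4) : Mat4 := ketBra (bell i) (bell i)

/-- A two-qubit density matrix: Hermitian positive semidefinite with trace one. -/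
def IsDensity (ρ : Mat4) : Prop := ρ.PosSemidef ∧ ρ.trace = 1

/-- Unit vector in ℂ². -/
def IsUnitVec (u : Fin 2 → ℂ) : Prop := ∑ x, Complex.normSq (u x) = 1

/-- Separable two-qubit density matrix: convex mixture of products of pure states. -/
def SepState (ρ : Mat4) : Prop :=
  ∃ (n : ℕ) (p : Fin n → ℝ) (u v : Fin n → Fin 2 → ℂ),
    (∀ i, 0 ≤ p i) ∧ (∑ i, p i = 1) ∧
    (∀ i, IsUnitVec (u i)) ∧ (∀ i, IsUnitVec (v i)) ∧
    ρ = ∑ i, (p i : ℂ) • (vecMulVec (u i) (star (u i)) ⊗ₖ vecMulVec (v i) (star (v i)))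

/-- A SEP map: Kraus operators in product form, trace preserving. -/
def IsSEP (T : Mat4 → Mat4) : Prop :=
  ∃ (k : ℕ) (A B : Fin k → Mat2),
    (∑ i, (A i ⊗ₖ B i)ᴴ * (A i ⊗ₖ B i) = 1) ∧
    ∀ X, T X = ∑ i, (A i ⊗ₖ B i) * X * (A i ⊗ₖ B i)ᴴ

/-- CPTP map in Kraus form. -/
def IsCPTP (T : Mat4 → Mat4) : Prop :=
  ∃ (k : ℕ) (K : Fin k → Mat4),
    (∑ i, (K i)ᴴ * K i = 1) ∧ ∀ X, T X = ∑ i, K i * X * (K i)ᴴ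

/-- Non-entangling (NE) map: CPTP and maps separable states to separable states. -/
def IsNE (T : Mat4 → Mat4) : Prop :=
  IsCPTP T ∧ ∀ ρ, SepState ρ → SepState (T ρ)

/-- The MEMS state ρ_λ = λ1 Φ1 + λ2 |01⟩⟨01| + λ3 Φ2 + λ4 |10⟩⟨10|. -/
def mems (l1 l2 l3 l4 : ℝ) : Mat4 :=
  (l1 : ℂ) • bellProj 0 + (l2 : ℂ) • ketBra (ket 0 1) (ket 0 1) +
  (l3 : ℂ) • bellProj 1 + (l4 : ℂ) • ketBra (ket 1 0) (ket 1 0)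

/-- The Bell-diagonal state σ_λ = λ1 Φ1 + λ2 Φ2 + λ3 Φ3 + λ4 Φ4. -/
def bdiag (l1 l2 l3 l4 : ℝ) : Mat4 :=
  (l1 : ℂ) • bellProj 0 + (l2 : ℂ) • bellProj 1 + (l3 : ℂ) • bellProj 2 + (l4 : ℂ) • bellProj 3

/-- The normalized vector |Φ1(ε)⟩ = (|Φ1⟩ + ε|10⟩)/√(1+ε²). -/
def phi1eps (ε : ℝ) : Vec4 :=
  (Real.sqrt (1 + ε ^ 2) : ℂ)⁻¹ • (bell 0 + (ε : ℂ) • ket 1 0)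

/-!
Let `f₁`, `f₂` be the populations of `Φ1`, `Φ2` in the image of a state. A separable state has Bell
populations at most `1/2`, so evaluating `f₁`, `f₂` on suitable separable mixtures bounds them on
the constituents of `ρ_λ`. The mixtures `(Φ1 + Φ2)/2` and `(2 Φ1 + |01⟩⟨01| + |10⟩⟨10|)/4` turn
`f₁(ρ_λ) = λ1` into `f₁(Φ1) ≥ 1`. Positivity then forces `f₂(Φ1) = 0`, and the mixture
`(6 Φ2 + 9 |01⟩⟨01| + |10⟩⟨10|)/16` makes `f₂(ρ_λ) = λ2` impossible.
-/

/-- The product vector `u ⊗ v`. -/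
def prodVec (u v : Fin 2 → ℂ) : Vec4 := fun p => u p.1 * v p.2

/-- The population `⟨ψ|ρ|ψ⟩` of `ψ` in `ρ`, as a real functional. The imaginary part, which is
discarded, vanishes for Hermitian `ρ`. -/
def population (ψ : Vec4) : Mat4 →ₗ[ℝ] ℝ where
  toFun ρ := (star ψ ⬝ᵥ ρ *ᵥ ψ).re
  map_add' ρ σ := by simp [Matrix.add_mulVec, dotProduct_add]
  map_smul' c ρ := by simp [Matrix.smul_mulVec, dotProduct_smul]

lemma vecMulVec_kronecker_vecMulVec_star (u v : Fin 2 → ℂ) :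
    vecMulVec u (star u) ⊗ₖ vecMulVec v (star v) = ketBra (prodVec u v) (prodVec u v) := by
  ext p q
  simp only [ketBra, prodVec, vecMulVec_apply, kroneckerMap_apply, Pi.star_apply, star_mul']
  ring

lemma prodVec_single (i j : Fin 2) : prodVec (Pi.single i 1) (Pi.single j 1) = ket i j := by
  ext ⟨a, b⟩
  simp [prodVec, ket, Pi.single_apply, ← ite_and, and_comm]

lemma isUnitVec_single (i : Fin 2) : IsUnitVec (Pi.single i 1) := by
  fin_cases i <;> simp [IsUnitVec]

lemma ketBra_smul_smul (c : ℂ) (ψ : Vec4) :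
    ketBra (c • ψ) (c • ψ) = Complex.normSq c • ketBra ψ ψ := by
  ext p q
  simp only [ketBra, Pi.smul_apply, Matrix.smul_apply, smul_eq_mul, star_mul', Complex.real_smul,
    ← Complex.mul_conj, starRingEnd_apply]
  ring

lemma ketBra_posSemidef (ψ : Vec4) : (ketBra ψ ψ).PosSemidef :=
  Matrix.posSemidef_vecMulVec_self_star ψ

lemma inv_sqrt_two_mul_self : (Real.sqrt 2 : ℂ)⁻¹ * (Real.sqrt 2 : ℂ)⁻¹ = 1 / 2 := by
  rw [← mul_inv, ← Complex.ofReal_mul, Real.mul_self_sqrt zero_le_two]; norm_num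

lemma normSq_inv_sqrt_two : Complex.normSq (Real.sqrt 2 : ℂ)⁻¹ = 1 / 2 := by
  simp [Complex.normSq_ofReal]

lemma bellProj_zero : bellProj 0 =
    (1 / 2 : ℝ) • ketBra (ket 0 0 + ket 1 1) (ket 0 0 + ket 1 1) := by
  rw [← normSq_inv_sqrt_two, ← ketBra_smul_smul]; rfl

lemma bellProj_one : bellProj 1 =
    (1 / 2 : ℝ) • ketBra (ket 0 0 - ket 1 1) (ket 0 0 - ket 1 1) := by
  rw [← normSq_inv_sqrt_two, ← ketBra_smul_smul]; rfl

lemma mems_eq_smul (l1 l2 l3 l4 : ℝ) : mems l1 l2 l3 l4 =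
    l1 • bellProj 0 + l2 • ketBra (ket 0 1) (ket 0 1) + l3 • bellProj 1 +
      l4 • ketBra (ket 1 0) (ket 1 0) := by
  simp only [mems, Complex.coe_smul]

lemma bdiag_eq_sum (l : Fin 4 → ℝ) :
    bdiag (l 0) (l 1) (l 2) (l 3) = ∑ i, l i • bellProj i := by
  simp only [bdiag, Complex.coe_smul, Fin.sum_univ_four]

lemma population_ketBra (ψ φ : Vec4) :
    population ψ (ketBra φ φ) = Complex.normSq (star ψ ⬝ᵥ φ) := by
  change (star ψ ⬝ᵥ vecMulVec φ (star φ) *ᵥ ψ).re = _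
  rw [Matrix.vecMulVec_mulVec, dotProduct_smul, Matrix.star_dotProduct φ ψ]
  simp [Complex.normSq_apply]

lemma population_nonneg (ψ : Vec4) {ρ : Mat4} (hρ : ρ.PosSemidef) : 0 ≤ population ψ ρ :=
  hρ.re_dotProduct_nonneg ψ

lemma star_bell_dotProduct_bell (i j : Fin 4) :
    star (bell i) ⬝ᵥ bell j = if i = j then 1 else 0 := by
  fin_cases i <;> fin_cases j <;>
    norm_num [dotProduct, Fintype.sum_prod_type, bell, ket, inv_sqrt_two_mul_self]

lemma population_bell_bdiag (i : Fin 4) (l : Fin 4 → ℝ) :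
    population (bell i) (bdiag (l 0) (l 1) (l 2) (l 3)) = l i := by
  simp [bdiag_eq_sum, bellProj, population_ketBra, star_bell_dotProduct_bell, apply_ite]

lemma population_eq_trace (ψ : Vec4) (ρ : Mat4) :
    population ψ ρ = (ketBra ψ ψ * ρ).trace.re := by
  change (star ψ ⬝ᵥ ρ *ᵥ ψ).re = (vecMulVec ψ (star ψ) * ρ).trace.re
  rw [Matrix.vecMulVec_mul, Matrix.trace_vecMulVec, Matrix.dotProduct_mulVec, dotProduct_comm]

lemma sum_bellProj : ∑ i, bellProj i = 1 := by
  let B : Matrix Q2 (Fin 4) ℂ := Matrix.of fun p i => bell i p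
  have orthonormal : Bᴴ * B = 1 := by
    ext i j
    exact (star_bell_dotProduct_bell i j).trans (Matrix.one_apply ..).symm
  have complete : B * Bᴴ = 1 := (Matrix.mul_eq_one_comm_of_equiv finProdFinEquiv).mpr orthonormal
  rw [← complete]
  ext p q
  exact Matrix.sum_apply ..

lemma sum_population_bell (ρ : Mat4) : ∑ i, population (bell i) ρ = ρ.trace.re := by
  have sum_mul : ∑ i, ketBra (bell i) (bell i) * ρ = ρ := by
    rw [← Finset.sum_mul]
    exact sum_bellProj ▸ one_mul ρ
  simp only [population_eq_trace, ← Complex.re_sum, ← Matrix.trace_sum, sum_mul]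

lemma population_bell_add_le {i j : Fin 4} (hij : i ≠ j) {ρ : Mat4} (hρ : ρ.PosSemidef) :
    population (bell i) ρ + population (bell j) ρ ≤ ρ.trace.re := by
  rw [← sum_population_bell, ← Finset.sum_pair (f := fun k => population (bell k) ρ) hij]
  exact Finset.sum_le_sum_of_subset_of_nonneg (Finset.subset_univ _)
    fun k _ _ => population_nonneg (bell k) hρ

lemma normSq_mul_add_mul_le (a b c d : ℂ) : Complex.normSq (a * c + b * d) ≤
    (Complex.normSq a + Complex.normSq b) * (Complex.normSq c + Complex.normSq d) := by
  have lagrange : (Complex.normSq a + Complex.normSq b) * (Complex.normSq c + Complex.normSq d) =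
      Complex.normSq (a * c + b * d) + Complex.normSq (a * star d - b * star c) := by
    simp [Complex.normSq_apply]; ring
  linarith [Complex.normSq_nonneg (a * star d - b * star c)]

lemma population_bell_prodVec_le (i : Fin 4) {u v : Fin 2 → ℂ} (hu : IsUnitVec u)
    (hv : IsUnitVec v) : population (bell i) (ketBra (prodVec u v) (prodVec u v)) ≤ 1 / 2 := by
  simp only [IsUnitVec, Fin.sum_univ_two] at hu hv
  have bilinear : ∃ a b c d : ℂ, Complex.normSq a + Complex.normSq b = 1 ∧
      Complex.normSq c + Complex.normSq d = 1 ∧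
      star (bell i) ⬝ᵥ prodVec u v = (Real.sqrt 2 : ℂ)⁻¹ * (a * c + b * d) := by
    fin_cases i
    on_goal 1 => refine ⟨u 0, u 1, v 0, v 1, hu, hv, ?_⟩
    on_goal 2 => refine ⟨u 0, -u 1, v 0, v 1, by simpa, hv, ?_⟩
    on_goal 3 => refine ⟨u 0, u 1, v 1, v 0, hu, by rwa [add_comm], ?_⟩
    on_goal 4 => refine ⟨-u 0, u 1, v 1, v 0, by simpa, by rwa [add_comm], ?_⟩
    all_goals
      simp [dotProduct, Fintype.sum_prod_type, bell, ket, prodVec]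
      ring
  obtain ⟨a, b, c, d, hab, hcd, h⟩ := bilinear
  rw [population_ketBra, h, Complex.normSq_mul, normSq_inv_sqrt_two]
  have cauchySchwarz := normSq_mul_add_mul_le a b c d
  rw [hab, hcd] at cauchySchwarz
  linarith

namespace SepState

lemma posSemidef {ρ : Mat4} (hρ : SepState ρ) : ρ.PosSemidef := by
  obtain ⟨n, p, u, v, hp, -, -, -, rfl⟩ := hρ
  refine Matrix.posSemidef_sum _ fun i _ => ?_
  rw [vecMulVec_kronecker_vecMulVec_star]
  exact (ketBra_posSemidef _).smul (Complex.zero_le_real.mpr (hp i))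

lemma trace_eq_one {ρ : Mat4} (hρ : SepState ρ) : ρ.trace = 1 := by
  obtain ⟨n, p, u, v, -, hsum, hu, hv, rfl⟩ := hρ
  have trace_one {w : Fin 2 → ℂ} (hw : IsUnitVec w) : (vecMulVec w (star w)).trace = 1 := by
    rw [Matrix.trace_vecMulVec, ← Complex.ofReal_one, ← hw]
    simp [dotProduct, Complex.mul_conj]
  simp [Matrix.trace_sum, Matrix.trace_smul, Matrix.trace_kronecker, trace_one (hu _),
    trace_one (hv _), ← Complex.ofReal_sum, hsum]

lemma population_bell_le {ρ : Mat4} (hρ : SepState ρ) (i : Fin 4) :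
    population (bell i) ρ ≤ 1 / 2 := by
  obtain ⟨n, p, u, v, hp, hsum, hu, hv, rfl⟩ := hρ
  simp only [Complex.coe_smul, map_sum, map_smul, smul_eq_mul, vecMulVec_kronecker_vecMulVec_star]
  calc ∑ j, p j * population (bell i) (ketBra (prodVec (u j) (v j)) (prodVec (u j) (v j)))
      ≤ ∑ j, p j * (1 / 2) := Finset.sum_le_sum fun j _ =>
        mul_le_mul_of_nonneg_left (population_bell_prodVec_le i (hu j) (hv j)) (hp j)
    _ = 1 / 2 := by rw [← Finset.sum_mul, hsum, one_mul]

end SepState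

lemma sepState_ketBra_ket (i j : Fin 2) : SepState (ketBra (ket i j) (ket i j)) :=
  ⟨1, fun _ => 1, fun _ => Pi.single i 1, fun _ => Pi.single j 1, fun _ => zero_le_one, by simp,
    fun _ => isUnitVec_single i, fun _ => isUnitVec_single j,
    by simp only [vecMulVec_kronecker_vecMulVec_star, prodVec_single, Complex.ofReal_one, one_smul,
      Finset.univ_unique, Finset.sum_singleton]⟩

lemma sepState_bellProj_zero_add_one : SepState ((1 / 2 : ℝ) • (bellProj 0 + bellProj 1)) := by
  refine ⟨2, fun _ => 1 / 2, fun i => Pi.single i 1, fun i => Pi.single i 1,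
    fun _ => by norm_num, by norm_num, isUnitVec_single, isUnitVec_single, ?_⟩
  simp only [vecMulVec_kronecker_vecMulVec_star, prodVec_single, bellProj_zero, bellProj_one]
  ext p q
  simp [ketBra, Fin.sum_univ_two]
  ring

/-- The fourth roots of unity `z` rotate `u ⊗ v` by opposite local phases `z` and `z⁻¹`. The average
keeps no coherence except the one between `|00⟩` and `|11⟩`. -/
lemma sum_ketBra_prodVec_phase (u v : Fin 2 → ℂ) :
    ∑ k : Fin 4, (1 / 4 : ℝ) •
      ketBra (prodVec ![u 0, Complex.I ^ (k : ℕ) * u 1] ![v 0, (-Complex.I) ^ (k : ℕ) * v 1])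
        (prodVec ![u 0, Complex.I ^ (k : ℕ) * u 1] ![v 0, (-Complex.I) ^ (k : ℕ) * v 1]) =
    ketBra ((u 0 * v 0) • ket 0 0 + (u 1 * v 1) • ket 1 1)
        ((u 0 * v 0) • ket 0 0 + (u 1 * v 1) • ket 1 1) +
      Complex.normSq (u 0 * v 1) • ketBra (ket 0 1) (ket 0 1) +
      Complex.normSq (u 1 * v 0) • ketBra (ket 1 0) (ket 1 0) := by
  have pow_three (z : ℂ) : z ^ 3 = z ^ 2 * z := pow_succ z 2
  ext ⟨a, b⟩ ⟨c, d⟩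
  fin_cases a <;> fin_cases b <;> fin_cases c <;> fin_cases d <;>
    simp [ketBra, prodVec, ket, Fin.sum_univ_four, pow_three, ← Complex.mul_conj] <;>
    ring_nf <;> simp [Complex.I_sq] <;> ring

lemma sepState_phase_average {u v : Fin 2 → ℂ} (hu : IsUnitVec u) (hv : IsUnitVec v) :
    SepState (ketBra ((u 0 * v 0) • ket 0 0 + (u 1 * v 1) • ket 1 1)
        ((u 0 * v 0) • ket 0 0 + (u 1 * v 1) • ket 1 1) +
      Complex.normSq (u 0 * v 1) • ketBra (ket 0 1) (ket 0 1) +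
      Complex.normSq (u 1 * v 0) • ketBra (ket 1 0) (ket 1 0)) := by
  refine ⟨4, fun _ => 1 / 4, fun k => ![u 0, Complex.I ^ (k : ℕ) * u 1],
    fun k => ![v 0, (-Complex.I) ^ (k : ℕ) * v 1], fun _ => by norm_num, by norm_num,
    fun k => by simpa [IsUnitVec] using hu, fun k => by simpa [IsUnitVec] using hv, ?_⟩
  simp only [vecMulVec_kronecker_vecMulVec_star, Complex.coe_smul, sum_ketBra_prodVec_phase]

lemma sepState_bellProj_zero_add_kets : SepState ((1 / 4 : ℝ) •
    ((2 : ℝ) • bellProj 0 + ketBra (ket 0 1) (ket 0 1) + ketBra (ket 1 0) (ket 1 0))) := by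
  let u : Fin 2 → ℂ := fun _ => (Real.sqrt 2 : ℂ)⁻¹
  have hu : IsUnitVec u := by norm_num [IsUnitVec, u, normSq_inv_sqrt_two]
  convert sepState_phase_average hu hu using 1
  simp only [u, ← smul_add, ketBra_smul_smul, Complex.normSq_mul, normSq_inv_sqrt_two,
    bellProj_zero]
  module

lemma sepState_bellProj_one_add_kets : SepState ((1 / 16 : ℝ) •
    ((6 : ℝ) • bellProj 1 + (9 : ℝ) • ketBra (ket 0 1) (ket 0 1) +
      ketBra (ket 1 0) (ket 1 0))) := by
  let s : ℂ := (Real.sqrt 3 / 2 : ℝ)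
  have hs : Complex.normSq s = 3 / 4 := by
    rw [Complex.normSq_ofReal, ← sq, div_pow, Real.sq_sqrt zero_le_three]; norm_num
  have hu : IsUnitVec ![s, 1 / 2] := by norm_num [IsUnitVec, hs]
  have hv : IsUnitVec ![-1 / 2, s] := by norm_num [IsUnitVec, hs]
  convert sepState_phase_average hu hv using 1
  have hw : (![s, 1 / 2] 0 * ![-1 / 2, s] 0) • ket 0 0 + (![s, 1 / 2] 1 * ![-1 / 2, s] 1) • ket 1 1
      = (-s / 2) • (ket 0 0 - ket 1 1) := by
    simp only [Matrix.cons_val_zero, Matrix.cons_val_one]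
    module
  rw [hw, ketBra_smul_smul, bellProj_one]
  norm_num [hs]
  module

section

variable {f : Mat4 →ₗ[ℝ] ℝ} {l1 l2 l3 l4 : ℝ}

lemma apply_bellProj_zero_eq {c : ℝ} (hf : ∀ ρ, SepState ρ → f ρ = c) : f (bellProj 0) = c := by
  have mixture := hf _ sepState_bellProj_zero_add_kets
  simp only [map_smul, map_add, smul_eq_mul, hf _ (sepState_ketBra_ket _ _)] at mixture
  linarith

lemma one_le_apply_bellProj_zero (hf₀ : ∀ ρ, SepState ρ → 0 ≤ f ρ)
    (hf : ∀ ρ, SepState ρ → f ρ ≤ 1 / 2) (hl2 : 0 ≤ l2) (hl3 : 0 ≤ l3) (hl4 : l4 ≤ l2)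
    (hl1 : 2 * l2 + l3 < l1) (hmems : f (mems l1 l2 l3 l4) = l1) : 1 ≤ f (bellProj 0) := by
  have bell_pair := hf _ sepState_bellProj_zero_add_one
  have bell_kets := hf _ sepState_bellProj_zero_add_kets
  have ket_nonneg := hf₀ _ (sepState_ketBra_ket 1 0)
  simp only [mems_eq_smul, map_smul, map_add, smul_eq_mul] at hmems bell_pair bell_kets
  have deficit : (l1 - 2 * l2 - l3) * (1 - f (bellProj 0)) ≤ 0 := by
    linarith [mul_le_mul_of_nonneg_left bell_pair hl3, mul_le_mul_of_nonneg_left bell_kets hl2,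
      mul_le_mul_of_nonneg_right hl4 ket_nonneg]
  by_contra! h
  exact deficit.not_gt (mul_pos (by linarith) (by linarith))

lemma apply_mems_lt (hf₀ : ∀ ρ, SepState ρ → 0 ≤ f ρ) (hf : ∀ ρ, SepState ρ → f ρ ≤ 1 / 2)
    (hl3 : 0 ≤ l3) (hl2 : 3 / 2 * l3 < l2) (hl4 : l3 + l4 < l2)
    (hzero : f (bellProj 0) = 0) : f (mems l1 l2 l3 l4) < l2 := by
  have bell_kets := hf _ sepState_bellProj_one_add_kets
  have ket01_le := hf _ (sepState_ketBra_ket 0 1)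
  have ket10_nonneg := hf₀ _ (sepState_ketBra_ket 1 0)
  have ket10_le := hf _ (sepState_ketBra_ket 1 0)
  simp only [mems_eq_smul, map_smul, map_add, smul_eq_mul, hzero] at bell_kets ⊢
  have ket10_term : (l4 - l3 / 6) * f (ketBra (ket 1 0) (ket 1 0)) <
      l2 / 2 - 7 / 12 * l3 := by
    rcases le_total l4 (l3 / 6) with h | h
    · linarith [mul_nonpos_of_nonpos_of_nonneg (sub_nonpos.mpr h) ket10_nonneg]
    · linarith [mul_le_mul_of_nonneg_left ket10_le (sub_nonneg.mpr h)]
  linarith [mul_le_mul_of_nonneg_left bell_kets hl3,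
    mul_le_mul_of_nonneg_left ket01_le (sub_nonneg.mpr hl2.le)]

end

namespace IsCPTP

variable {T : Mat4 → Mat4}

lemma isLinearMap (hT : IsCPTP T) : IsLinearMap ℝ T := by
  obtain ⟨k, K, -, hT⟩ := hT
  constructor <;> intros <;>
    simp [hT, Matrix.mul_add, Matrix.add_mul, Finset.sum_add_distrib, Finset.smul_sum]

lemma posSemidef (hT : IsCPTP T) {ρ : Mat4} (hρ : ρ.PosSemidef) : (T ρ).PosSemidef := by
  obtain ⟨k, K, -, hT⟩ := hT
  rw [hT]
  exact Matrix.posSemidef_sum _ fun i _ => hρ.mul_mul_conjTranspose_same (K i)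

end IsCPTP

theorem no_NE_regionC_general {l1 l2 l3 l4 : ℝ} (hl3 : 0 ≤ l3) (hl1 : 2 * l2 + l3 < l1)
    (hl2 : 3 / 2 * l3 < l2) (hl4 : l3 + l4 < l2) {T : Mat4 →ₗ[ℝ] Mat4}
    (hpos : ∀ ρ, ρ.PosSemidef → (T ρ).PosSemidef) (hsep : ∀ ρ, SepState ρ → SepState (T ρ)) :
    T (mems l1 l2 l3 l4) ≠ bdiag l1 l2 l3 l4 := by
  intro hmap
  let f (i : Fin 4) : Mat4 →ₗ[ℝ] ℝ := population (bell i) ∘ₗ T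
  have hf₀ (i : Fin 4) (ρ : Mat4) (hρ : SepState ρ) : 0 ≤ f i ρ :=
    population_nonneg _ (hsep ρ hρ).posSemidef
  have hf (i : Fin 4) (ρ : Mat4) (hρ : SepState ρ) : f i ρ ≤ 1 / 2 :=
    (hsep ρ hρ).population_bell_le i
  have hval (i : Fin 4) : f i (mems l1 l2 l3 l4) = ![l1, l2, l3, l4] i := by
    rw [LinearMap.comp_apply, hmap]
    exact population_bell_bdiag i ![l1, l2, l3, l4]
  have hTΦ : (T (bellProj 0)).PosSemidef := hpos _ (ketBra_posSemidef _)
  have htrace : (T (bellProj 0)).trace.re = 1 :=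
    apply_bellProj_zero_eq (f := Complex.reLm ∘ₗ Matrix.traceLinearMap Q2 ℝ ℂ ∘ₗ T)
      fun ρ hρ => by simp [(hsep ρ hρ).trace_eq_one]
  have one_le : 1 ≤ f 0 (bellProj 0) := one_le_apply_bellProj_zero (hf₀ 0) (hf 0)
    (by linarith) hl3 (by linarith) hl1 (hval 0)
  have add_le : f 0 (bellProj 0) + f 1 (bellProj 0) ≤ 1 :=
    (population_bell_add_le zero_ne_one hTΦ).trans_eq htrace
  have hzero : f 1 (bellProj 0) = 0 :=
    le_antisymm (by linarith) (population_nonneg _ hTΦ)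
  exact (apply_mems_lt (hf₀ 1) (hf 1) hl3 hl2 hl4 hzero).ne (hval 1)

theorem no_NE_regionC (l1 l2 l3 l4 : ℝ)
    (h12 : l2 ≤ l1) (h23 : l3 ≤ l2) (h34 : l4 ≤ l3) (h4 : 0 ≤ l4)
    (hsum : l1 + l2 + l3 + l4 = 1)
    (hC1 : 2 * l2 + l3 - l1 < 0) (hC2 : 0 ≤ 2 * l3 + l4 - l2)
    (hC3 : l3 > 2 * l4) (hC4 : l2 > (3 / 2) * l3) :
    ¬ ∃ T : Mat4 → Mat4, IsNE T ∧ T (mems l1 l2 l3 l4) = bdiag l1 l2 l3 l4 := by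
  rintro ⟨T, ⟨hT, hsep⟩, hmap⟩
  exact no_NE_regionC_general (T := hT.isLinearMap.mk' T) (by linarith) (by linarith) hC4
    (by linarith) (fun _ => hT.posSemidef) hsep hmap
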